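/- Let ρ₀ satisfy the stated first-order equation with limits a and b at ∓∞. Let v : ℝ → ℝ be twice continuously differentiable with v and v' bounded, let h : ℝ → ℝ be continuous with ∫_ℝ |h(z)ρ₀'(z)| dz < ∞, and suppose −v''(z) + f_A(ρ₀(z))v(z) = h(z) for all z ∈ ℝ. Then ∫_ℝ h(z) ρ₀'(z) dz = 0. -/

import Mathlib

open Filter MeasureTheory

/-- `f_A(ρ) = (ρ² − a²)(ρ² − b²)(2ρ² − a² − b²) + 2((2ρ² − a² − b²)² + 2(ρ² − a²)(ρ² − b²))ρ²`. -/
noncomputable def fA (a b ρ : ℝ) : ℝ :=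
  (ρ ^ 2 - a ^ 2) * (ρ ^ 2 - b ^ 2) * (2 * ρ ^ 2 - a ^ 2 - b ^ 2)
    + 2 * ((2 * ρ ^ 2 - a ^ 2 - b ^ 2) ^ 2
        + 2 * (ρ ^ 2 - a ^ 2) * (ρ ^ 2 - b ^ 2)) * ρ ^ 2

/-- (Compatibility condition for the `f_A` operator.) If `v` is `C²` with
`v, v'` bounded, `h` continuous with `h ρ₀'` integrable, and `−v'' + f_A(ρ₀)v = h`, then
`∫_ℝ h ρ₀' = 0`. -/
theorem statement9 (a b : ℝ) (ha : 0 < a) (hab : a < b) (ρ₀ : ℝ → ℝ)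
    (hreg : ContDiff ℝ 1 ρ₀)
    (hderiv : ∀ z, deriv ρ₀ z =
      Real.sqrt 2 / 2 * ((ρ₀ z) ^ 2 - a ^ 2) * (b ^ 2 - (ρ₀ z) ^ 2))
    (hbnd : ∀ z, a < ρ₀ z ∧ ρ₀ z < b)
    (hbot : Tendsto ρ₀ atBot (nhds a))
    (htop : Tendsto ρ₀ atTop (nhds b))
    (v h : ℝ → ℝ) (hv : ContDiff ℝ 2 v)
    (hvbd : ∃ M, ∀ z, |v z| ≤ M)
    (hv'bd : ∃ M, ∀ z, |deriv v z| ≤ M)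
    (hh : Continuous h)
    (hint : Integrable (fun z => h z * deriv ρ₀ z))
    (heq : ∀ z, -(deriv (deriv v) z) + fA a b (ρ₀ z) * v z = h z) :
    (∫ z : ℝ, h z * deriv ρ₀ z) = 0 := by
  obtain ⟨M, hM⟩ := hvbd
  obtain ⟨N, hN⟩ := hv'bd
  have hρ : ∀ z, HasDerivAt ρ₀ (deriv ρ₀ z) z := fun z =>
    (hreg.differentiable (by norm_num) z).hasDerivAt
  have hv1 : ∀ z, HasDerivAt v (deriv v z) z := fun z =>
    (hv.differentiable (by norm_num) z).hasDerivAt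
  have hv2 : ∀ z, HasDerivAt (deriv v) (deriv (deriv v) z) z := fun z =>
    ((hv.iterate_deriv' 1 1).differentiable (by norm_num) z).hasDerivAt
  have h2 : Real.sqrt 2 * Real.sqrt 2 = 2 := Real.mul_self_sqrt (by norm_num)
  let G : ℝ → ℝ := fun r => Real.sqrt 2 / 2 * (r ^ 2 - a ^ 2) * (b ^ 2 - r ^ 2)
  let K : ℝ → ℝ := fun r => r * ((r ^ 2 - a ^ 2) * (r ^ 2 - b ^ 2) * (2 * r ^ 2 - a ^ 2 - b ^ 2))
  have hGc : Continuous G := by fun_prop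
  have hKc : Continuous K := by fun_prop
  have hG : ∀ r, HasDerivAt G (Real.sqrt 2 * r * (a ^ 2 + b ^ 2 - 2 * r ^ 2)) r := by
    intro r
    have hs : HasDerivAt (fun r : ℝ => r ^ 2) (2 * r) r := by
      simpa using hasDerivAt_pow 2 r
    refine HasDerivAt.congr_deriv (((hs.sub_const (a ^ 2)).const_mul (Real.sqrt 2 / 2)).mul
      (hs.const_sub (b ^ 2))) ?_
    ring
  have hK : ∀ r, HasDerivAt K (fA a b r) r := by
    intro r
    have hs : HasDerivAt (fun r : ℝ => r ^ 2) (2 * r) r := by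
      simpa using hasDerivAt_pow 2 r
    refine HasDerivAt.congr_deriv ((hasDerivAt_id r).mul (((hs.sub_const (a ^ 2)).mul (hs.sub_const (b ^ 2))).mul
      (((hs.const_mul 2).sub_const (a ^ 2)).sub_const (b ^ 2)))) ?_
    simp [fA]
    ring
  have hW : ∀ z, HasDerivAt (fun z => v z * K (ρ₀ z) - deriv v z * G (ρ₀ z))
      (h z * deriv ρ₀ z) z := by
    intro z
    have e1 := (hv1 z).mul ((hK (ρ₀ z)).comp z (hρ z))
    have e2 := (hv2 z).mul ((hG (ρ₀ z)).comp z (hρ z))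
    refine HasDerivAt.congr_deriv (e1.sub e2) ?_
    rw [← heq z]
    simp only [Function.comp, hderiv z, G, K]
    linear_combination ((deriv v z) * ρ₀ z * ((ρ₀ z) ^ 2 - a ^ 2) * (b ^ 2 - (ρ₀ z) ^ 2) *
      (2 * (ρ₀ z) ^ 2 - a ^ 2 - b ^ 2) / 2) * h2
  have key : ∀ (l : Filter ℝ) (c : ℝ), Tendsto ρ₀ l (nhds c) → G c = 0 → K c = 0 →
      Tendsto (fun z => v z * K (ρ₀ z) - deriv v z * G (ρ₀ z)) l (nhds 0) := by
    intro l c hc hGz hKz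
    have t1 : Tendsto (fun z => K (ρ₀ z)) l (nhds 0) := hKz ▸ (hKc.tendsto c).comp hc
    have t2 : Tendsto (fun z => G (ρ₀ z)) l (nhds 0) := hGz ▸ (hGc.tendsto c).comp hc
    have u1 : Tendsto (fun z => v z * K (ρ₀ z)) l (nhds 0) :=
      bdd_le_mul_tendsto_zero' M (Eventually.of_forall hM) t1
    have u2 : Tendsto (fun z => deriv v z * G (ρ₀ z)) l (nhds 0) :=
      bdd_le_mul_tendsto_zero' N (Eventually.of_forall hN) t2
    simpa using u1.sub u2
  have := integral_of_hasDerivAt_of_tendsto hW hint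
    (key atBot a hbot (by simp [G]) (by simp [K])) (key atTop b htop (by simp [G]) (by simp [K]))
  simpa using this
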